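/- Let n ≥ 2 and let λ_1, …, λ_N ∈ sl_n(ℂ) be nonzero diagonalizable traceless matrices, each having exactly two distinct eigenvalues, and assume the smaller of the two eigenvalue multiplicities equals the same integer m for every λ_i. Let Z ⊆ sl_n(ℂ) be a Zariski-closed subset stable under conjugation by GL_n(ℂ) and under multiplication by complex scalars, such that: (i) every diagonalizable element of Z has the form t·g·λ_i·g⁻¹ for some index i, some t ∈ ℂ and some g ∈ GL_n(ℂ); and (ii) every nilpotent element X of Z satisfies X² = 0 and rank X ≤ m. Then every element of Z is either conjugate to a scalar multiple of some λ_i or is nilpotent with X² = 0 and rank X ≤ m; equivalently, Z is contained in the union over i of the Zariski closures of the cones {t·g·λ_i·g⁻¹ : t ∈ ℂ∖{0}, g ∈ GL_n(ℂ)}. -/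

import Mathlib

open Matrix

noncomputable section

abbrev Mat (n : ℕ) := Matrix (Fin n) (Fin n) ℂ

abbrev GLn (n : ℕ) := Matrix.GeneralLinearGroup (Fin n) ℂ

/-- A subset of the space of `n×n` complex matrices is Zariski closed if it is the
common zero locus of a family of polynomials in the matrix entries. -/
def zclosed {n : ℕ} (S : Set (Mat n)) : Prop :=
  ∃ T : Set (MvPolynomial (Fin n × Fin n) ℂ),
    S = {X | ∀ p ∈ T, MvPolynomial.eval (fun q => X q.1 q.2) p = 0}

/-- The Zariski closure of a set of matrices. -/
def zclosure {n : ℕ} (S : Set (Mat n)) : Set (Mat n) :=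
  ⋂₀ {C | zclosed C ∧ S ⊆ C}

theorem zclosed_isClosed {n : ℕ} {S : Set (Mat n)} (h : zclosed S) : IsClosed S := by
  obtain ⟨T, rfl⟩ := h
  have : {X : Mat n | ∀ p ∈ T, MvPolynomial.eval (fun q => X q.1 q.2) p = 0} =
      ⋂ p ∈ T, {X : Mat n | MvPolynomial.eval (fun q => X q.1 q.2) p = 0} := by
    ext X; simp
  rw [this]
  refine isClosed_biInter fun p _ => isClosed_eq ?_ continuous_const
  refine (MvPolynomial.continuous_eval p).comp ?_
  refine continuous_pi fun q => ?_
  fun_prop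

/-- Limits at `0` along a continuous curve. -/
theorem mem_of_curve {n : ℕ} {S : Set (Mat n)} (h : IsClosed S) (Y : ℂ → Mat n)
    (hY : Continuous Y) (hS : ∀ c, c ≠ 0 → Y c ∈ S) : Y 0 ∈ S := by
  have h1 : IsClosed (Y ⁻¹' S) := h.preimage hY
  have h2 : ({0}ᶜ : Set ℂ) ⊆ Y ⁻¹' S := fun c hc => hS c hc
  have h3 : closure ({0}ᶜ : Set ℂ) ⊆ Y ⁻¹' S := h1.closure_subset_iff.mpr h2
  rw [(dense_compl_singleton (0 : ℂ)).closure_eq] at h3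
  exact h3 (Set.mem_univ 0)

theorem basis_GL {n : ℕ} (b : Module.Basis (Fin n) ℂ (Fin n → ℂ)) :
    ∃ P : GLn n, (∀ k, (P : Mat n) *ᵥ Pi.single k 1 = b k) ∧
      (∀ k, ((P⁻¹ : GLn n) : Mat n) *ᵥ (b k) = Pi.single k 1) := by
  let A := (Pi.basisFun ℂ (Fin n)).toMatrix b
  let B := b.toMatrix (Pi.basisFun ℂ (Fin n))
  let P : GLn n := ⟨A, B, Module.Basis.toMatrix_mul_toMatrix_flip _ _,
    Module.Basis.toMatrix_mul_toMatrix_flip _ _⟩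
  have h1 : ∀ k, (P : Mat n) *ᵥ Pi.single k 1 = b k := by
    intro k
    ext i
    simp [P, A, Module.Basis.toMatrix_apply]
  refine ⟨P, h1, fun k => ?_⟩
  rw [← h1 k, Matrix.mulVec_mulVec, ← Units.val_mul, inv_mul_cancel]
  rw [Units.val_one, Matrix.one_mulVec]

theorem degen_coord {n : ℕ} {Z : Set (Mat n)} (hZ : IsClosed Z)
    (hconj : ∀ g : GLn n, ∀ X ∈ Z, (↑g : Mat n) * X * (↑g⁻¹ : Mat n) ∈ Z)
    (hscal : ∀ c : ℂ, ∀ X ∈ Z, c • X ∈ Z) (B : Mat n) (hB : B ∈ Z)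
    (i0 i1 i2 : Fin n) (h01 : i0 ≠ i1) (h02 : i0 ≠ i2) (h12 : i1 ≠ i2) (a b d : ℂ) (hd : d ≠ 0)
    (c0 : ∀ i, B i i0 = if i = i0 then a else 0)
    (c1 : ∀ i, B i i1 = if i = i0 then 1 else if i = i1 then a else 0)
    (c2 : ∀ i, B i i2 = if i = i1 then d else if i = i2 then b else 0) :
    ∃ Y ∈ Z, IsNilpotent Y ∧ Y * Y ≠ 0 := by
  let k : Fin n → ℕ := fun i => if i = i0 then 1 else if i = i1 then 2 else if i = i2 then 3 else 0
  let Y : ℂ → Mat n := fun c i j => c ^ (k i + 1 - k j) * B i j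
  have hYc : Continuous Y := by
    refine continuous_matrix fun i j => ?_
    simp only [Y]
    fun_prop
  have hY : ∀ c, c ≠ 0 → Y c ∈ Z := by
    intro c hc
    let g : GLn n := ⟨Matrix.diagonal fun i => c ^ (k i), Matrix.diagonal fun i => (c ^ (k i))⁻¹,
      by simp [Matrix.diagonal_mul_diagonal, hc], by simp [Matrix.diagonal_mul_diagonal, hc]⟩
    have : Y c = c • ((g : Mat n) * B * ((g⁻¹ : GLn n) : Mat n)) := by
      ext i j
      have hg : (g : Mat n) = Matrix.diagonal fun i => c ^ (k i) := rfl
      have hg' : ((g⁻¹ : GLn n) : Mat n) = Matrix.diagonal fun i => (c ^ (k i))⁻¹ := rfl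
      rw [hg, hg', Matrix.smul_apply, Matrix.mul_diagonal, Matrix.diagonal_mul]
      simp only [Y, smul_eq_mul]
      by_cases hle : k j ≤ k i + 1
      · have : c ^ (k i + 1) = c ^ (k i + 1 - k j) * c ^ (k j) := by
          rw [← pow_add]; congr 1; omega
        have h3 : c ^ (k j) ≠ 0 := pow_ne_zero _ hc
        field_simp
        linear_combination (-(B i j)) * this
      · have : B i j = 0 := by
          by_cases e0 : j = i0
          · subst e0; exfalso; apply hle; simp [k]
          by_cases e1 : j = i1
          · subst e1; rw [c1]; simp only [k] at hle
            split_ifs at hle ⊢ <;> first | rfl | omega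
          by_cases e2 : j = i2
          · subst e2; rw [c2]; simp only [k] at hle
            split_ifs at hle ⊢ <;> first | rfl | omega | grind
          · exfalso; apply hle; simp [k, e0, e1, e2]
        simp [this]
    rw [this]
    exact hscal _ _ (hconj _ _ hB)
  have h0 := mem_of_curve hZ Y hYc hY
  have hY0 : Y 0 = Matrix.single i0 i1 1 + Matrix.single i1 i2 d := by
    ext i j
    simp only [Y, Matrix.add_apply, Matrix.single_apply, zero_pow_eq]
    by_cases e0 : j = i0
    · subst e0; rw [c0]; simp only [k]; grind
    by_cases e1 : j = i1
    · subst e1; rw [c1]; simp only [k]; grind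
    by_cases e2 : j = i2
    · subst e2; rw [c2]; simp only [k]; grind
    have : k j = 0 := by simp [k, e0, e1, e2]
    rw [this]
    simp [Ne.symm e1, Ne.symm e2]
  have hsq : Y 0 * Y 0 = Matrix.single i0 i2 d := by
    rw [hY0]
    simp [add_mul, mul_add, h01, h02, h12, h01.symm, h02.symm, h12.symm]
  refine ⟨Y 0, h0, ⟨3, ?_⟩, ?_⟩
  · rw [pow_succ, pow_two, hsq, hY0]
    simp [mul_add, h02.symm, h12.symm]
  · rw [hsq]
    intro h
    have := congrFun (congrFun h i0) i2
    simp at this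
    exact hd this

theorem degen {n : ℕ} {Z : Set (Mat n)} (hZ : IsClosed Z)
    (hconj : ∀ g : GLn n, ∀ X ∈ Z, (↑g : Mat n) * X * (↑g⁻¹ : Mat n) ∈ Z)
    (hscal : ∀ c : ℂ, ∀ X ∈ Z, c • X ∈ Z) (X : Mat n) (hX : X ∈ Z)
    (a b : ℂ) (hab : a ≠ b) (u v f : Fin n → ℂ) (hu0 : u ≠ 0) (hf0 : f ≠ 0)
    (hu : X *ᵥ u = a • u) (hv : X *ᵥ v = a • v + u) (hf : X *ᵥ f = b • f) :
    ∃ Y ∈ Z, IsNilpotent Y ∧ Y * Y ≠ 0 := by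
  have hab' : a - b ≠ 0 := sub_ne_zero.mpr hab
  let al : ℂ := -1 / (a - b)
  let w : Fin n → ℂ := f + v + al • u
  have hw : X *ᵥ w = b • w + (a - b) • v := by
    simp only [w, Matrix.mulVec_add, Matrix.mulVec_smul, hu, hv, hf]
    ext i
    simp only [Pi.add_apply, Pi.smul_apply, smul_eq_mul, al]
    field_simp
    ring
  have key : ∀ x y z : ℂ, x • u + y • v + z • f = 0 → x = 0 ∧ y = 0 ∧ z = 0 := by
    intro x y z h
    have h1 : y • u + (z * (b - a)) • f = 0 := by
      have h' := congrArg (fun t => X *ᵥ t - a • t) h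
      simp only [Matrix.mulVec_add, Matrix.mulVec_smul, hu, hv, hf, Matrix.mulVec_zero,
        smul_zero, sub_zero] at h'
      rw [← h']
      module
    have h2 : (z * (b - a) * (b - a)) • f = 0 := by
      have h' := congrArg (fun t => X *ᵥ t - a • t) h1
      simp only [Matrix.mulVec_add, Matrix.mulVec_smul, hu, hv, hf, Matrix.mulVec_zero,
        smul_zero, sub_zero] at h'
      rw [← h']
      module
    have hz : z = 0 := by
      have hba : b - a ≠ 0 := sub_ne_zero.mpr hab.symm
      simpa [hf0, hba] using h2
    subst hz
    have hy : y = 0 := by simpa [hu0] using h1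
    subst hy
    have hx : x = 0 := by simpa [hu0] using h
    exact ⟨hx, rfl, rfl⟩
  have hLI : LinearIndependent ℂ ![u, v, w] := by
    rw [Fintype.linearIndependent_iff]
    intro g hg
    simp only [Fin.sum_univ_three, Matrix.cons_val_zero, Matrix.cons_val_one, Matrix.cons_val] at hg
    obtain ⟨k1, k2, k3⟩ := key (g 0 + g 2 * al) (g 1 + g 2) (g 2) (by rw [← hg]; simp only [w]; module)
    rw [k3] at k1 k2
    intro i
    fin_cases i
    · simpa using k1
    · simpa using k2
    · exact k3
  let bs := Module.Basis.sumExtend hLI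
  have : Finite (Fin 3 ⊕ Module.Basis.sumExtendIndex hLI) := Module.Finite.finite_basis bs
  let e : (Fin 3 ⊕ Module.Basis.sumExtendIndex hLI) ≃ Fin n := by
    have := Module.finrank_eq_nat_card_basis bs
    rw [Module.finrank_fin_fun] at this
    exact (Finite.equivFinOfCardEq this.symm)
  have hbs : ∀ j, bs (Sum.inl j) = ![u, v, w] j := by
    intro j
    simp [bs, Module.Basis.sumExtend]
    rfl
  obtain ⟨P, hP, hP'⟩ := basis_GL (bs.reindex e)
  let B : Mat n := ((P⁻¹ : GLn n) : Mat n) * X * (P : Mat n)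
  have hB : B ∈ Z := by
    have := hconj P⁻¹ X hX
    rwa [inv_inv] at this
  have pu := hP' (e (Sum.inl 0))
  have pv := hP' (e (Sum.inl 1))
  have pw := hP' (e (Sum.inl 2))
  have qu := hP (e (Sum.inl 0))
  have qv := hP (e (Sum.inl 1))
  have qw := hP (e (Sum.inl 2))
  simp only [Module.Basis.reindex_apply, Equiv.symm_apply_apply, hbs, Matrix.cons_val_zero,
    Matrix.cons_val_one, Matrix.cons_val] at pu pv pw qu qv qw
  have hne : ∀ i j : Fin 3, i ≠ j → e (Sum.inl i) ≠ e (Sum.inl j) := by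
    intro i j hij h
    exact hij (Sum.inl_injective (e.injective h))
  have hcol : ∀ i j, B i j = (B *ᵥ Pi.single j 1) i := by
    intro i j; simp
  refine degen_coord hZ hconj hscal B hB (e (Sum.inl 0)) (e (Sum.inl 1)) (e (Sum.inl 2))
    (hne _ _ (by decide)) (hne _ _ (by decide)) (hne _ _ (by decide)) a b (a - b) hab' ?_ ?_ ?_
  · intro i
    rw [hcol]
    simp only [B]
    rw [← Matrix.mulVec_mulVec, ← Matrix.mulVec_mulVec, qu, hu, Matrix.mulVec_smul, pu]
    simp [Pi.single_apply]
  · intro i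
    rw [hcol]
    simp only [B]
    rw [← Matrix.mulVec_mulVec, ← Matrix.mulVec_mulVec, qv, hv, Matrix.mulVec_add,
      Matrix.mulVec_smul, pu, pv]
    have := hne 0 1 (by decide)
    simp only [Pi.add_apply, Pi.smul_apply, Pi.single_apply, smul_eq_mul]
    grind
  · intro i
    rw [hcol]
    simp only [B]
    rw [← Matrix.mulVec_mulVec, ← Matrix.mulVec_mulVec, qw, hw, Matrix.mulVec_add,
      Matrix.mulVec_smul, Matrix.mulVec_smul, pv, pw]
    have := hne 1 2 (by decide)
    simp only [Pi.add_apply, Pi.smul_apply, Pi.single_apply, smul_eq_mul]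
    grind

/-- If there is no rank two generalized eigenvector, the matrix is diagonalizable. -/
theorem diag_of {n : ℕ} (X : Mat n)
    (h : ∀ (a : ℂ) (u v : Fin n → ℂ), X *ᵥ u = a • u → X *ᵥ v = a • v + u → u = 0) :
    ∃ (g : GLn n) (d : Fin n → ℂ), X = (↑g : Mat n) * Matrix.diagonal d * (↑g⁻¹ : Mat n) := by
  let F : Module.End ℂ (Fin n → ℂ) := Matrix.toLin' X
  have hgen : ∀ a, F.maxGenEigenspace a ≤ F.eigenspace a := by
    intro a x hx
    rw [Module.End.mem_maxGenEigenspace] at hx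
    obtain ⟨k, hk⟩ := hx
    have hstep : ∀ k (y : Fin n → ℂ), ((F - a • (1 : Module.End ℂ (Fin n → ℂ))) ^ k) y = 0 →
        (F - a • (1 : Module.End ℂ (Fin n → ℂ))) y = 0 := by
      intro k
      induction k with
      | zero => intro y hy; simp at hy; simp [hy]
      | succ k ih =>
        intro y hy
        rw [pow_succ, Module.End.mul_apply] at hy
        have h2 := ih _ hy
        apply h a _ y
        · rw [LinearMap.sub_apply, sub_eq_zero] at h2
          simpa [F] using h2
        · simp [F]
    have := hstep k x hk
    rw [Module.End.mem_eigenspace_iff]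
    rw [LinearMap.sub_apply, sub_eq_zero] at this
    simpa using this
  have htop : (⨆ a, F.eigenspace a) = ⊤ := by
    rw [eq_top_iff, ← Module.End.iSup_maxGenEigenspace_eq_top F]
    exact iSup_mono hgen
  rw [Submodule.iSup_eq_span] at htop
  let bs := Module.Basis.ofSpan htop.ge
  have := Module.Finite.finite_basis bs
  have hc := Module.finrank_eq_nat_card_basis bs
  rw [Module.finrank_fin_fun] at hc
  let e := Finite.equivFinOfCardEq hc.symm
  have heig : ∀ i, ∃ a : ℂ, F (bs.reindex e i) = a • (bs.reindex e i) := by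
    intro i
    have : bs (e.symm i) ∈ (⋃ a, (F.eigenspace a : Set (Fin n → ℂ))) :=
      Module.Basis.ofSpan_subset htop.ge (Set.mem_range_self _)
    rw [Set.mem_iUnion] at this
    obtain ⟨a, ha⟩ := this
    refine ⟨a, ?_⟩
    rw [Module.Basis.reindex_apply]
    exact Module.End.mem_eigenspace_iff.mp ha
  choose d hd using heig
  obtain ⟨P, hP, hP'⟩ := basis_GL (bs.reindex e)
  refine ⟨P, d, ?_⟩
  have hXP : X * (P : Mat n) = (P : Mat n) * Matrix.diagonal d := by
    apply Matrix.ext_of_mulVec_single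
    intro i
    rw [← Matrix.mulVec_mulVec, ← Matrix.mulVec_mulVec, hP]
    have := hd i
    simp only [F, Matrix.toLin'_apply] at this
    rw [this, ← hP i, ← Matrix.mulVec_smul]
    congr 1
    ext j
    simp [Matrix.diagonal_apply, Pi.single_apply]
  rw [← hXP, mul_assoc, ← Units.val_mul, mul_inv_cancel]
  simp

theorem nil_of {n : ℕ} (hn : 2 ≤ n) (X : Mat n) (htr : X.trace = 0) (a : ℂ)
    (h : ∀ (b : ℂ) (f : Fin n → ℂ), f ≠ 0 → X *ᵥ f = b • f → a = b) : IsNilpotent X := by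
  let F : Module.End ℂ (Fin n → ℂ) := Matrix.toLin' X
  have htop : F.maxGenEigenspace a = ⊤ := by
    rw [eq_top_iff, ← Module.End.iSup_maxGenEigenspace_eq_top F]
    refine iSup_le fun b => ?_
    by_cases hab : a = b
    · rw [hab]
    · have : F.maxGenEigenspace b = ⊥ := by
        by_contra hne
        have h1 : F.HasUnifEigenvalue b ⊤ := hne
        have h2 : F.HasEigenvalue b := h1.lt (by simp)
        obtain ⟨f, hf⟩ := h2.exists_hasEigenvector
        exact hab (h b f hf.2 (by simpa [F] using hf.apply_eq_smul))
      rw [this]; exact bot_le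
  have hnil : IsNilpotent (F - a • (1 : Module.End ℂ (Fin n → ℂ))) := by
    rw [Module.End.maxGenEigenspace_eq_genEigenspace_finrank, Module.End.genEigenspace_nat,
      LinearMap.ker_eq_top] at htop
    exact ⟨_, htop⟩
  have hnilM : IsNilpotent (X - a • (1 : Mat n)) := by
    have : F - a • (1 : Module.End ℂ (Fin n → ℂ)) = Matrix.toLinAlgEquiv' (X - a • (1 : Mat n)) := by
      rw [map_sub, map_smul, map_one]; rfl
    rw [this] at hnil
    exact (IsNilpotent.map_iff (Matrix.toLinAlgEquiv' (R := ℂ) (n := Fin n)).injective).mp hnil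
  have ht := (Matrix.isNilpotent_trace_of_isNilpotent hnilM).eq_zero
  have ha : a = 0 := by
    have hn0 : n ≠ 0 := by omega
    simpa [htr, hn0] using ht
  simpa [ha] using hnilM

theorem exists_submodule_between {V : Type*} [AddCommGroup V] [Module ℂ V] [FiniteDimensional ℂ V]
    (A B : Submodule ℂ V) (hAB : A ≤ B) (p : ℕ) (h1 : Module.finrank ℂ A ≤ p)
    (h2 : p ≤ Module.finrank ℂ B) :
    ∃ W : Submodule ℂ V, A ≤ W ∧ W ≤ B ∧ Module.finrank ℂ W = p := by
  induction p, h1 using Nat.le_induction with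
  | base => exact ⟨A, le_rfl, hAB, rfl⟩
  | succ p hp ih =>
    obtain ⟨W, hW1, hW2, hW3⟩ := ih (by omega)
    have hlt : W < B := lt_of_le_of_ne hW2 (by rintro rfl; omega)
    obtain ⟨v, hvB, hvW⟩ := SetLike.exists_of_lt hlt
    refine ⟨W ⊔ Submodule.span ℂ {v}, hW1.trans le_sup_left, sup_le hW2 ?_, ?_⟩
    · rwa [Submodule.span_singleton_le_iff_mem]
    · rw [Submodule.finrank_sup_span_singleton hvW, hW3]

theorem nil_in_closure {n : ℕ} (p q : ℕ) (hpq : p + q = n) (a b : ℂ) (hab : a ≠ b) (X : Mat n)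
    (hX : X * X = 0) (hp : X.rank ≤ p) (hq : X.rank ≤ q) (L : Mat n) (g : GLn n)
    (hL : L = (↑g : Mat n) * Matrix.diagonal (fun k : Fin n => if (k : ℕ) < p then a else b) *
        (↑g⁻¹ : Mat n)) :
    X ∈ zclosure {X | ∃ t : ℂ, t ≠ 0 ∧ ∃ g : GLn n,
      X = t • ((↑g : Mat n) * L * (↑g⁻¹ : Mat n))} := by
  let F : (Fin n → ℂ) →ₗ[ℂ] (Fin n → ℂ) := Matrix.toLin' X
  have hrk : Module.finrank ℂ (LinearMap.range F) = X.rank := by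
    rw [Matrix.rank_eq_finrank_range_toLin X (Pi.basisFun ℂ _) (Pi.basisFun ℂ _)]
    rfl
  have hle : LinearMap.range F ≤ LinearMap.ker F := by
    rintro _ ⟨x, rfl⟩
    rw [LinearMap.mem_ker]
    simp [F, Matrix.mulVec_mulVec, hX]
  have hrn := LinearMap.finrank_range_add_finrank_ker F
  rw [Module.finrank_fin_fun] at hrn
  obtain ⟨W, hW1, hW2, hW3⟩ := exists_submodule_between _ _ hle p (by omega) (by omega)
  obtain ⟨C, hC⟩ := Submodule.exists_isCompl W
  have hC3 : Module.finrank ℂ C = q := by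
    have := Submodule.finrank_add_eq_of_isCompl hC
    rw [Module.finrank_fin_fun] at this
    omega
  subst hpq
  let bW := Module.finBasisOfFinrankEq ℂ W hW3
  let bC := Module.finBasisOfFinrankEq ℂ C hC3
  let bs : Module.Basis (Fin (p + q)) ℂ (Fin (p + q) → ℂ) :=
    ((bW.prod bC).map (Submodule.prodEquivOfIsCompl W C hC)).reindex finSumFinEquiv
  have hbW : ∀ k : Fin (p + q), (k : ℕ) < p → bs k ∈ W := by
    intro k hk
    obtain ⟨j, rfl⟩ : ∃ j : Fin p, k = finSumFinEquiv (Sum.inl j) := ⟨⟨k, hk⟩, by ext; simp⟩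
    rw [Module.Basis.reindex_apply, Equiv.symm_apply_apply, Module.Basis.map_apply,
      Module.Basis.prod_apply]
    simp
  obtain ⟨P, hP, hP'⟩ := basis_GL bs
  let D : Mat (p + q) := Matrix.diagonal (fun k : Fin (p + q) => if (k : ℕ) < p then a else b)
  let M : Mat (p + q) := (P : Mat (p + q)) * D * ((P⁻¹ : GLn (p + q)) : Mat (p + q))
  have hMb : ∀ k, M *ᵥ bs k = (if (k : ℕ) < p then a else b) • bs k := by
    intro k
    simp only [M]
    rw [← Matrix.mulVec_mulVec, ← Matrix.mulVec_mulVec, hP', ← hP k, ← Matrix.mulVec_smul]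
    congr 1
    ext j
    simp [D, Matrix.diagonal_apply, Pi.single_apply]
  have hMW : ∀ x ∈ W, M *ᵥ x = a • x := by
    intro x hx
    have : x = ∑ j, bW.repr ⟨x, hx⟩ j • bs (finSumFinEquiv (Sum.inl j)) := by
      have h1 := congrArg (Subtype.val) (bW.sum_repr ⟨x, hx⟩)
      refine h1.symm.trans ?_
      rw [Submodule.coe_sum]
      refine Finset.sum_congr rfl fun j _ => ?_
      rw [Submodule.coe_smul, Module.Basis.reindex_apply, Equiv.symm_apply_apply,
        Module.Basis.map_apply, Module.Basis.prod_apply]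
      simp
    rw [this, Matrix.mulVec_sum, Finset.smul_sum]
    refine Finset.sum_congr rfl fun j _ => ?_
    rw [Matrix.mulVec_smul, hMb, smul_comm]
    simp
  have hMX : M * X = a • X := by
    apply Matrix.ext_of_mulVec_single
    intro i
    rw [← Matrix.mulVec_mulVec, hMW, Matrix.smul_mulVec]
    exact hW1 ⟨Pi.single i 1, by simp [F]⟩
  have hXM : X * M = b • X := by
    have h1 : Matrix.toLin' (X * M) = Matrix.toLin' (b • X) := by
      refine bs.ext fun k => ?_
      rw [Matrix.toLin'_apply, Matrix.toLin'_apply, ← Matrix.mulVec_mulVec, hMb,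
        Matrix.mulVec_smul, Matrix.smul_mulVec]
      split_ifs with hk
      · have : X *ᵥ bs k = 0 := by
          have := hW2 (hbW k hk)
          rwa [LinearMap.mem_ker] at this
        simp [this]
      · rfl
    exact Matrix.toLin'.injective h1
  have hba : b - a ≠ 0 := sub_ne_zero.mpr hab.symm
  rintro S ⟨hS, hsub⟩
  have hcurve := mem_of_curve (zclosed_isClosed hS) (fun c => c • M + X) (by fun_prop) ?_
  · simpa using hcurve
  intro c hc
  apply hsub
  let s : ℂ := 1 / (c * (b - a))
  let U : GLn (p + q) := ⟨1 + s • X, 1 - s • X, by simp [mul_sub, add_mul, hX],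
    by simp [mul_add, sub_mul, hX]⟩
  refine ⟨c, hc, U * P * g⁻¹, ?_⟩
  have h1 : ((U * P * g⁻¹ : GLn (p + q)) : Mat (p + q)) * L * (((U * P * g⁻¹)⁻¹ : GLn (p + q)) : Mat (p + q)) =
      (1 + s • X) * M * (1 - s • X) := by
    have hU : (U : Mat (p + q)) = 1 + s • X := rfl
    have hU' : ((U⁻¹ : GLn (p + q)) : Mat (p + q)) = 1 - s • X := rfl
    have hg : ((g⁻¹ : GLn (p + q)) : Mat (p + q)) * (g : Mat (p + q)) = 1 := by
      rw [← Units.val_mul, inv_mul_cancel]; rfl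
    rw [hL, _root_.mul_inv_rev, _root_.mul_inv_rev, inv_inv, Units.val_mul, Units.val_mul, Units.val_mul,
      Units.val_mul, hU, hU']
    simp only [M, D, mul_assoc]
    rw [← mul_assoc ((g⁻¹ : GLn (p + q)) : Mat (p + q)) (g : Mat (p + q)), hg, one_mul,
      ← mul_assoc ((g⁻¹ : GLn (p + q)) : Mat (p + q)) (g : Mat (p + q)), hg, one_mul]
  rw [h1]
  have h2 : (1 + s • X) * M * (1 - s • X) = M + (s * (b - a)) • X := by
    simp only [add_mul, one_mul, mul_sub, mul_one, Matrix.smul_mul, Matrix.mul_smul, hXM, hMX, hX,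
      smul_zero, sub_zero]
    module
  rw [h2, smul_add, smul_smul]
  have : c * (s * (b - a)) = 1 := by simp only [s]; field_simp
  rw [this, one_smul]

theorem stmt_2 (n m N : ℕ) (hn : 2 ≤ n) (hN : 1 ≤ N)
    (lam : Fin N → Mat n)
    -- each `lam i` is a nonzero diagonalizable traceless matrix with exactly two distinct
    -- eigenvalues, whose smaller eigenvalue multiplicity equals `m`
    (hlam : ∀ i : Fin N, ∃ (p q : ℕ) (a b : ℂ) (g : GLn n),
      1 ≤ p ∧ 1 ≤ q ∧ p + q = n ∧ a ≠ b ∧ min p q = m ∧ (lam i).trace = 0 ∧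
      lam i = (↑g : Mat n) * Matrix.diagonal (fun k : Fin n => if (k : ℕ) < p then a else b) *
        (↑g⁻¹ : Mat n))
    (Z : Set (Mat n))
    (hZsl : Z ⊆ {X : Mat n | X.trace = 0})
    (hZclosed : zclosed Z)
    (hconj : ∀ g : GLn n, ∀ X ∈ Z, (↑g : Mat n) * X * (↑g⁻¹ : Mat n) ∈ Z)
    (hscal : ∀ c : ℂ, ∀ X ∈ Z, c • X ∈ Z)
    (hdiag : ∀ X ∈ Z, (∃ (g : GLn n) (d : Fin n → ℂ),
        X = (↑g : Mat n) * Matrix.diagonal d * (↑g⁻¹ : Mat n)) →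
      ∃ (i : Fin N) (t : ℂ) (g : GLn n), X = t • ((↑g : Mat n) * lam i * (↑g⁻¹ : Mat n)))
    (hnil : ∀ X ∈ Z, IsNilpotent X → X * X = 0 ∧ X.rank ≤ m) :
    (∀ X ∈ Z, (∃ (i : Fin N) (t : ℂ) (g : GLn n),
        X = t • ((↑g : Mat n) * lam i * (↑g⁻¹ : Mat n))) ∨
      (X * X = 0 ∧ X.rank ≤ m)) ∧
    Z ⊆ ⋃ i : Fin N, zclosure {X | ∃ t : ℂ, t ≠ 0 ∧ ∃ g : GLn n,
      X = t • ((↑g : Mat n) * lam i * (↑g⁻¹ : Mat n))} := by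
  have hcl := zclosed_isClosed hZclosed
  have main : ∀ X ∈ Z, (∃ (i : Fin N) (t : ℂ) (g : GLn n),
        X = t • ((↑g : Mat n) * lam i * (↑g⁻¹ : Mat n))) ∨
      (X * X = 0 ∧ X.rank ≤ m) := by
    intro X hX
    by_cases hni : IsNilpotent X
    · exact Or.inr (hnil X hX hni)
    left
    apply hdiag X hX
    apply diag_of
    intro a u v hu hv
    by_contra hu0
    apply hni
    apply nil_of hn X (hZsl hX) a
    intro b f hf0 hf
    by_contra hab
    obtain ⟨Y, hYZ, hYn, hY⟩ := degen hcl hconj hscal X hX a b hab u v f hu0 hf0 hu hv hf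
    exact hY (hnil Y hYZ hYn).1
  refine ⟨main, ?_⟩
  have hnilcl : ∀ X : Mat n, X * X = 0 → X.rank ≤ m → X ∈ ⋃ i : Fin N,
      zclosure {X | ∃ t : ℂ, t ≠ 0 ∧ ∃ g : GLn n,
      X = t • ((↑g : Mat n) * lam i * (↑g⁻¹ : Mat n))} := by
    intro X h1 h2
    obtain ⟨p, q, a, b, g, -, -, hpq, hab, hm, -, hL⟩ := hlam ⟨0, hN⟩
    refine Set.mem_iUnion.mpr ⟨⟨0, hN⟩, ?_⟩
    exact nil_in_closure p q hpq a b hab X h1 (by omega) (by omega) _ g hL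
  intro X hX
  rcases main X hX with ⟨i, t, g, h⟩ | ⟨h1, h2⟩
  · by_cases ht : t = 0
    · have h0 : X = 0 := by rw [h, ht, zero_smul]
      apply hnilcl X <;> simp [h0]
    · refine Set.mem_iUnion.mpr ⟨i, ?_⟩
      rintro S ⟨-, hS⟩
      exact hS ⟨t, ht, g, h⟩
  · exact hnilcl X h1 h2
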